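/- (Hyperboloidal energy inequality) Let φ be a smooth solution of □_m φ = 0 on { t ≥ 2 } with initial data φ(2,·) = f ∈ H¹(ℝ^d), ∂_t φ(2,·) = g ∈ L²(ℝ^d), with f, g compactly supported in B(0,2). Then for every τ > √(inf over the support), the hyperboloidal energy E_m(φ,τ) = ∫_{Σ_τ} [ (1/(tτ)) Σᵢ (L^i φ)² + (τ/t)(∂_t φ)² + (t/τ) m² φ² ] dvol_τ satisfies E_m(φ,τ) ≤ ∫_{ℝ^d} g² + |∇f|² + m² f² dx. -/

import Mathlib

open MeasureTheory Real

noncomputable section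

/-- Spatial slice: ℝ^d as Euclidean space. -/
abbrev Spc (d : ℕ) := EuclideanSpace ℝ (Fin d)

/-- Time derivative ∂ₜ. -/
def dt {d : ℕ} (φ : ℝ × Spc d → ℝ) (p : ℝ × Spc d) : ℝ := fderiv ℝ φ p (1, 0)

/-- Spatial derivative ∂_{xⁱ}. -/
def dx {d : ℕ} (i : Fin d) (φ : ℝ × Spc d → ℝ) (p : ℝ × Spc d) : ℝ :=
  fderiv ℝ φ p (0, EuclideanSpace.single i 1)

/-- Lorentz boost Lⁱ = xⁱ ∂ₜ + t ∂_{xⁱ}. -/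
def boost {d : ℕ} (i : Fin d) (φ : ℝ × Spc d → ℝ) (p : ℝ × Spc d) : ℝ :=
  p.2 i * dt φ p + p.1 * dx i φ p

/-- Klein–Gordon operator □ₘ = -∂ₜₜ + Δ - m². -/
def box {d : ℕ} (m : ℝ) (φ : ℝ × Spc d → ℝ) (p : ℝ × Spc d) : ℝ :=
  -(dt (dt φ) p) + (∑ i, dx i (dx i φ) p) - m ^ 2 * φ p

/-- Spatial derivative for functions on ℝ^d. -/
def dxs {d : ℕ} (i : Fin d) (f : Spc d → ℝ) (x : Spc d) : ℝ :=
  fderiv ℝ f x (EuclideanSpace.single i 1)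

/-- Laplacian on ℝ^d. -/
def lap {d : ℕ} (f : Spc d → ℝ) (x : Spc d) : ℝ := ∑ i, dxs i (dxs i f) x

/-- The hyperboloidal energy E_m(φ, τ): the hyperboloid Σ_τ = {t² - |x|² = τ², t > 0}
is parametrized by x ↦ (√(τ² + |x|²), x), with induced volume form (τ/t)dx. -/
def energy {d : ℕ} (m τ : ℝ) (φ : ℝ × Spc d → ℝ) : ℝ :=
  ∫ x : Spc d,
    (fun t => (fun p : ℝ × Spc d =>
      ((1 / (t * τ)) * ∑ i, (boost i φ p) ^ 2 + (τ / t) * (dt φ p) ^ 2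
          + (t / τ) * m ^ 2 * (φ p) ^ 2) * (τ / t))
      (t, x)) (Real.sqrt (τ ^ 2 + ‖x‖ ^ 2))

section Calculus

variable {d : ℕ}

lemma contDiff_dt {u : ℝ × Spc d → ℝ} (hu : ContDiff ℝ (⊤ : ℕ∞) u) :
    ContDiff ℝ (⊤ : ℕ∞) (dt u) :=
  (hu.fderiv_right (m := (⊤ : ℕ∞)) (by exact_mod_cast le_rfl)).clm_apply contDiff_const

lemma contDiff_dx {u : ℝ × Spc d → ℝ} (hu : ContDiff ℝ (⊤ : ℕ∞) u) (i : Fin d) :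
    ContDiff ℝ (⊤ : ℕ∞) (dx i u) :=
  (hu.fderiv_right (m := (⊤ : ℕ∞)) (by exact_mod_cast le_rfl)).clm_apply contDiff_const

lemma contDiff_dxs {f : Spc d → ℝ} (hf : ContDiff ℝ (⊤ : ℕ∞) f) (i : Fin d) :
    ContDiff ℝ (⊤ : ℕ∞) (dxs i f) :=
  (hf.fderiv_right (m := (⊤ : ℕ∞)) (by exact_mod_cast le_rfl)).clm_apply contDiff_const

lemma differentiable_of_smooth {E : Type*} [NormedAddCommGroup E] [NormedSpace ℝ E] {u : E → ℝ}
    (hu : ContDiff ℝ (⊤ : ℕ∞) u) : Differentiable ℝ u :=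
  hu.differentiable (by simp)

lemma dt_mul {u w : ℝ × Spc d → ℝ} (hu : Differentiable ℝ u) (hw : Differentiable ℝ w)
    (p : ℝ × Spc d) : dt (fun q => u q * w q) p = dt u p * w p + u p * dt w p := by
  simp only [dt]
  rw [fderiv_fun_mul (hu p) (hw p)]
  simp
  ring

lemma dx_mul {u w : ℝ × Spc d → ℝ} (hu : Differentiable ℝ u) (hw : Differentiable ℝ w)
    (i : Fin d) (p : ℝ × Spc d) :
    dx i (fun q => u q * w q) p = dx i u p * w p + u p * dx i w p := by
  simp only [dx]
  rw [fderiv_fun_mul (hu p) (hw p)]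
  simp
  ring

lemma dxs_mul {u w : Spc d → ℝ} (hu : Differentiable ℝ u) (hw : Differentiable ℝ w)
    (i : Fin d) (x : Spc d) :
    dxs i (fun y => u y * w y) x = dxs i u x * w x + u x * dxs i w x := by
  simp only [dxs]
  rw [fderiv_fun_mul (hu x) (hw x)]
  simp
  ring

/-- Mixed time and space derivatives of a smooth function commute. -/
lemma dt_dx_comm {u : ℝ × Spc d → ℝ} (hu : ContDiff ℝ (⊤ : ℕ∞) u) (i : Fin d)
    (p : ℝ × Spc d) : dt (dx i u) p = dx i (dt u) p := by
  have hd : DifferentiableAt ℝ (fderiv ℝ u) p :=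
    (hu.fderiv_right (m := (⊤ : ℕ∞)) (by exact_mod_cast le_rfl)).differentiable (by simp) p
  have hs : IsSymmSndFDerivAt ℝ u p :=
    hu.contDiffAt.isSymmSndFDerivAt (by
      simpa using WithTop.coe_le_coe.2 (le_top : (2 : ℕ∞) ≤ ⊤))
  have h1 : ∀ a b : ℝ × Spc d,
      fderiv ℝ (fun q => fderiv ℝ u q a) p b = fderiv ℝ (fderiv ℝ u) p b a := by
    intro a b
    rw [fderiv_clm_apply hd (differentiableAt_const a)]
    simp
  unfold dt dx
  rw [h1, h1]
  exact hs _ _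

lemma hasDerivAt_comp_graph {u : ℝ × Spc d → ℝ} (hu : Differentiable ℝ u) (c s : ℝ) (x : Spc d) :
    HasDerivAt (fun s : ℝ => u (2 + s * c, x)) (c * dt u (2 + s * c, x)) s := by
  have h1 : HasDerivAt (fun s : ℝ => ((2 + s * c, x) : ℝ × Spc d)) (c, 0) s := by
    have h := ((hasDerivAt_id s).mul_const c).const_add 2
    simp only [id, one_mul] at h
    exact h.prodMk (hasDerivAt_const s x)
  have h2 := (hu (2 + s * c, x)).hasFDerivAt.comp_hasDerivAt s h1
  have h3 : ((c, 0) : ℝ × Spc d) = c • (1, 0) := by simp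
  rw [h3, map_smul] at h2
  exact h2

lemma dxs_comp_graph {u : ℝ × Spc d → ℝ} (hu : Differentiable ℝ u) {v : Spc d → ℝ}
    (hv : Differentiable ℝ v) (i : Fin d) (s : ℝ) (x : Spc d) :
    dxs i (fun y => u (2 + s * v y, y)) x
      = dx i u (2 + s * v x, x) + s * dxs i v x * dt u (2 + s * v x, x) := by
  have h1 : HasFDerivAt (fun y : Spc d => ((2 + s * v y, y) : ℝ × Spc d))
      ((s • fderiv ℝ v x).prod (ContinuousLinearMap.id ℝ _)) x :=
    (((hv x).hasFDerivAt.const_mul s).const_add 2).prodMk (hasFDerivAt_id x)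
  have h2 := HasFDerivAt.comp (f := fun y : Spc d => ((2 + s * v y, y) : ℝ × Spc d)) x
    (hu (2 + s * v x, x)).hasFDerivAt h1
  have h4 : (fun y => u (2 + s * v y, y)) = u ∘ fun y => (2 + s * v y, y) := rfl
  unfold dxs dx dt
  rw [h4, h2.fderiv]
  have h3 : ((s * fderiv ℝ v x (EuclideanSpace.single i 1), EuclideanSpace.single i 1) :
      ℝ × Spc d) = (0, EuclideanSpace.single i 1)
        + (s * fderiv ℝ v x (EuclideanSpace.single i 1)) • (1, 0) := by simp
  simp only [ContinuousLinearMap.comp_apply, ContinuousLinearMap.prod_apply,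
    smul_apply, ContinuousLinearMap.id_apply, smul_eq_mul]
  rw [h3, map_add, map_smul, smul_eq_mul]

lemma hasCompactSupport_dxs {f : Spc d → ℝ} (hf : HasCompactSupport f) (i : Fin d) :
    HasCompactSupport (dxs i f) :=
  hf.fderiv_apply ℝ _

lemma integrable_dxs {f : Spc d → ℝ} (hf : ContDiff ℝ (⊤ : ℕ∞) f) (hc : HasCompactSupport f)
    (i : Fin d) : Integrable (dxs i f) :=
  (contDiff_dxs hf i).continuous.integrable_of_hasCompactSupport (hasCompactSupport_dxs hc i)

lemma integral_dxs_eq_zero {f : Spc d → ℝ} (hf : ContDiff ℝ (⊤ : ℕ∞) f)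
    (hc : HasCompactSupport f) (i : Fin d) : ∫ x, dxs i f x = 0 := by
  have hd := differentiable_of_smooth hf
  have h := integral_mul_fderiv_eq_neg_fderiv_mul_of_integrable (μ := (volume : Measure (Spc d)))
    (f := fun _ => (1 : ℝ)) (g := f) (v := EuclideanSpace.single i (1 : ℝ)) (by simp)
    (by simpa [dxs] using! integrable_dxs hf hc i)
    (by simpa using hf.continuous.integrable_of_hasCompactSupport hc)
    (fun x _ => differentiableAt_const _) (fun x _ => hd x)
  simpa [dxs] using h

lemma dt_eq_zero_of_eventuallyEq {u : ℝ × Spc d → ℝ} {p : ℝ × Spc d}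
    (h : u =ᶠ[nhds p] fun _ => 0) : dt u p = 0 := by
  simp [dt, h.fderiv_eq]

lemma norm_fderiv_sq (f : Spc d → ℝ) (x : Spc d) :
    ‖fderiv ℝ f x‖ ^ 2 = ∑ i, (dxs i f x) ^ 2 := by
  have := (EuclideanSpace.basisFun (Fin d) ℝ).norm_dual (fderiv ℝ f x)
  simp [dxs, this]

end Calculus

section Divergence

variable {d : ℕ}

/-- Energy monotonicity between the slice `t = 2` and the graph `t = 2 + v x`, for a current
`(E, -2 W)` with nonpositive divergence that vanishes for large `‖x‖`. -/
lemma integral_graph_le {E : ℝ × Spc d → ℝ} {W : Fin d → ℝ × Spc d → ℝ} {v : Spc d → ℝ}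
    (hE : ContDiff ℝ (⊤ : ℕ∞) E) (hW : ∀ i, ContDiff ℝ (⊤ : ℕ∞) (W i))
    (hv : ContDiff ℝ (⊤ : ℕ∞) v) (hv0 : ∀ x, 0 ≤ v x) (R : ℝ)
    (hER : ∀ t x, 1 < t → R < ‖x‖ → E (t, x) = 0)
    (hWR : ∀ i t x, 1 < t → R < ‖x‖ → W i (t, x) = 0)
    (hdiv : ∀ p, 2 ≤ p.1 → dt E p - 2 * ∑ i, dx i (W i) p ≤ 0) :
    ∫ x, (E (2 + v x, x) + 2 * ∑ i, dxs i v x * W i (2 + v x, x)) ≤ ∫ x, E (2, x) := by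
  have hEd := differentiable_of_smooth hE
  have hWd := fun i => differentiable_of_smooth (hW i)
  have hvd := differentiable_of_smooth hv
  have hcv : ∀ i, Continuous (dxs i v) := fun i => (contDiff_dxs hv i).continuous
  have hvc := hv.continuous
  have hEc := hE.continuous
  have hWc := fun i => (hW i).continuous
  have hEtc := (contDiff_dt hE).continuous
  have hWtc := fun i => (contDiff_dt (hW i)).continuous
  have hopen : ∀ t : ℝ, ∀ x : Spc d, 1 < t → R < ‖x‖ →
      {p : ℝ × Spc d | 1 < p.1 ∧ R < ‖p.2‖} ∈ nhds (t, x) := fun t x ht hx =>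
    ((isOpen_lt continuous_const continuous_fst).inter
      (isOpen_lt continuous_const continuous_snd.norm)).mem_nhds ⟨ht, hx⟩
  have hEt : ∀ t x, 1 < t → R < ‖x‖ → dt E (t, x) = 0 := fun t x ht hx =>
    dt_eq_zero_of_eventuallyEq (by
      filter_upwards [hopen t x ht hx] with p hp using hER p.1 p.2 hp.1 hp.2)
  have hWt : ∀ i t x, 1 < t → R < ‖x‖ → dt (W i) (t, x) = 0 := fun i t x ht hx =>
    dt_eq_zero_of_eventuallyEq (by
      filter_upwards [hopen t x ht hx] with p hp using hWR i p.1 p.2 hp.1 hp.2)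
  have ht1 : ∀ s x, 0 ≤ s → 1 < 2 + s * v x := fun s x hs => by
    have := mul_nonneg hs (hv0 x); linarith
  set F : ℝ → Spc d → ℝ := fun s x =>
    E (2 + s * v x, x) + 2 * ∑ i, s * dxs i v x * W i (2 + s * v x, x) with hF
  set F' : ℝ → Spc d → ℝ := fun s x => v x * dt E (2 + s * v x, x)
    + 2 * ∑ i, (dxs i v x * W i (2 + s * v x, x)
      + s * dxs i v x * (v x * dt (W i) (2 + s * v x, x))) with hF'
  have hFc : Continuous (Function.uncurry F) := by
    simp only [hF, Function.uncurry_def]; fun_prop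
  have hFc' : Continuous (Function.uncurry F') := by
    simp only [hF', Function.uncurry_def]; fun_prop
  have hFR : ∀ s x, 0 ≤ s → R < ‖x‖ → F s x = 0 := fun s x hs hx => by
    simp [hF, hER _ _ (ht1 s x hs) hx, hWR _ _ _ (ht1 s x hs) hx]
  have hFR' : ∀ s x, 0 ≤ s → R < ‖x‖ → F' s x = 0 := fun s x hs hx => by
    simp [hF', hEt _ _ (ht1 s x hs) hx, hWt _ _ _ (ht1 s x hs) hx, hWR _ _ _ (ht1 s x hs) hx]
  have hderiv : ∀ s x, HasDerivAt (fun s => F s x) (F' s x) s := by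
    intro s x
    refine (hasDerivAt_comp_graph hEd (v x) s x).add
      (HasDerivAt.const_mul 2 (HasDerivAt.fun_sum fun i _ => ?_))
    have := ((hasDerivAt_id s).mul_const (dxs i v x)).mul
      (hasDerivAt_comp_graph (hWd i) (v x) s x)
    simpa [Pi.mul_def] using! this
  have hFint : ∀ s, 0 ≤ s → Integrable (F s) := fun s hs =>
    (hFc.comp (Continuous.prodMk_right s)).integrable_of_hasCompactSupport
      (HasCompactSupport.intro (isCompact_closedBall (0 : Spc d) R) fun x hx =>
        hFR s x hs (by simpa using hx))
  have hsplit : ∀ s x, F' s x = v x * (dt E (2 + s * v x, x)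
      - 2 * ∑ i, dx i (W i) (2 + s * v x, x))
      + 2 * ∑ i, dxs i (fun y => v y * W i (2 + s * v y, y)) x := by
    intro s x
    have h : ∀ i, dxs i (fun y => v y * W i (2 + s * v y, y)) x
        = (dxs i v x * W i (2 + s * v x, x)
          + s * dxs i v x * (v x * dt (W i) (2 + s * v x, x)))
          + v x * dx i (W i) (2 + s * v x, x) := by
      intro i
      rw [dxs_mul hvd (by have := hWd i; fun_prop), dxs_comp_graph (hWd i) hvd]
      ring
    simp only [h, hF', Finset.sum_add_distrib, ← Finset.mul_sum]
    ring
  have hint' : ∀ s, 0 ≤ s → ∫ x, F' s x ≤ 0 := by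
    intro s hs
    have hG : ∀ i, ContDiff ℝ (⊤ : ℕ∞) (fun y => v y * W i (2 + s * v y, y)) := fun i => by
      have := hW i; fun_prop
    have hGc : ∀ i, HasCompactSupport (fun y => v y * W i (2 + s * v y, y)) := fun i =>
      HasCompactSupport.intro (isCompact_closedBall (0 : Spc d) R) fun x hx => by
        rw [hWR i _ x (ht1 s x hs) (by simpa using hx), mul_zero]
    have hle : ∫ x, F' s x ≤ ∫ x, 2 * ∑ i, dxs i (fun y => v y * W i (2 + s * v y, y)) x := by
      refine integral_mono ?_ ?_ fun x => ?_
      · exact (hFc'.comp (Continuous.prodMk_right s)).integrable_of_hasCompactSupport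
          (HasCompactSupport.intro (isCompact_closedBall (0 : Spc d) R) fun x hx =>
            hFR' s x hs (by simpa using hx))
      · exact (integrable_finsetSum _ fun i _ => integrable_dxs (hG i) (hGc i) i).const_mul 2
      · rw [hsplit]
        have := mul_nonpos_of_nonneg_of_nonpos (hv0 x)
          (hdiv (2 + s * v x, x) (by have := mul_nonneg hs (hv0 x); simpa using this))
        simpa using this
    rwa [integral_const_mul, integral_finsetSum _ fun i _ => integrable_dxs (hG i) (hGc i) i,
      Finset.sum_eq_zero fun i _ => integral_dxs_eq_zero (hG i) (hGc i) i, mul_zero] at hle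
  have hprod : Integrable (Function.uncurry F')
      ((volume.restrict (Set.uIoc (0 : ℝ) 1)).prod (volume : Measure (Spc d))) := by
    have hset : (volume.restrict (Set.uIoc (0 : ℝ) 1)).prod (volume : Measure (Spc d))
        = volume.restrict (Set.Ioc (0 : ℝ) 1 ×ˢ (Set.univ : Set (Spc d))) := by
      rw [Set.uIoc_of_le zero_le_one, Measure.volume_eq_prod, ← Measure.prod_restrict,
        Measure.restrict_univ]
    rw [hset]
    have hK : IsCompact (Set.Icc (0 : ℝ) 1 ×ˢ Metric.closedBall (0 : Spc d) R) :=
      isCompact_Icc.prod (isCompact_closedBall 0 R)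
    refine IntegrableOn.of_forall_sdiff_eq_zero
      (hFc'.continuousOn.integrableOn_compact hK) (measurableSet_Ioc.prod MeasurableSet.univ) ?_
    rintro ⟨s, x⟩ ⟨⟨hs, -⟩, hn⟩
    refine hFR' s x hs.1.le ?_
    by_contra hx
    exact hn ⟨Set.Ioc_subset_Icc_self hs, by simpa using hx⟩
  have hftc : ∀ x, ∫ s in (0 : ℝ)..1, F' s x = F 1 x - F 0 x := fun x =>
    intervalIntegral.integral_eq_sub_of_hasDerivAt (fun s _ => hderiv s x)
      ((hFc'.comp (Continuous.prodMk_left x)).intervalIntegrable 0 1)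
  have key : ∫ x, (F 1 x - F 0 x) ≤ 0 := by
    rw [← integral_congr_ae (Filter.Eventually.of_forall hftc)]
    rw [← intervalIntegral_integral_swap hprod]
    have := intervalIntegral.integral_mono_on_of_le_Ioo
      (μ := volume) (f := fun s => ∫ x, F' s x) (g := fun _ => (0 : ℝ)) zero_le_one
      ?_ intervalIntegrable_const (fun s hs => hint' s hs.1.le)
    · simpa using this
    · have := hprod.integral_prod_left
      rw [intervalIntegrable_iff]
      exact this
  rw [integral_sub (hFint 1 zero_le_one) (hFint 0 le_rfl)] at key
  have h1 : ∀ x, F 1 x = E (2 + v x, x) + 2 * ∑ i, dxs i v x * W i (2 + v x, x) := by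
    intro x; simp [hF]
  have h0 : ∀ x, F 0 x = E (2, x) := by intro x; simp [hF]
  simp only [h1, h0] at key
  linarith

end Divergence

section KleinGordon

variable {d : ℕ}

/-- The energy density `(∂ₜφ)² + |∇φ|² + m² φ²`. -/
def energyDensity (m : ℝ) (φ : ℝ × Spc d → ℝ) (p : ℝ × Spc d) : ℝ :=
  dt φ p ^ 2 + ∑ i, dx i φ p ^ 2 + m ^ 2 * φ p ^ 2

lemma contDiff_energyDensity (m : ℝ) {φ : ℝ × Spc d → ℝ} (hφ : ContDiff ℝ (⊤ : ℕ∞) φ) :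
    ContDiff ℝ (⊤ : ℕ∞) (energyDensity m φ) :=
  (((contDiff_dt hφ).pow 2).add (ContDiff.sum fun i _ => (contDiff_dx hφ i).pow 2)).add
    (contDiff_const.mul (hφ.pow 2))

lemma energyDensity_nonneg (m : ℝ) (φ : ℝ × Spc d → ℝ) (p : ℝ × Spc d) :
    0 ≤ energyDensity m φ p := by
  unfold energyDensity; positivity

/-- Local energy conservation for the Klein–Gordon equation. -/
lemma dt_energyDensity {m : ℝ} {φ : ℝ × Spc d → ℝ} (hφ : ContDiff ℝ (⊤ : ℕ∞) φ)
    {p : ℝ × Spc d} (hp : box m φ p = 0) :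
    dt (energyDensity m φ) p = 2 * ∑ i, dx i (fun q => dt φ q * dx i φ q) p := by
  have hd := differentiable_of_smooth hφ
  have hdt := differentiable_of_smooth (contDiff_dt hφ)
  have hdx := fun i => differentiable_of_smooth (contDiff_dx hφ i)
  have h1 : dt (energyDensity m φ) p = 2 * dt φ p * dt (dt φ) p
      + ∑ i, 2 * dx i φ p * dt (dx i φ) p + m ^ 2 * (2 * φ p * dt φ p) := by
    have h := (((hdt p).hasFDerivAt.pow 2).add
      (HasFDerivAt.fun_sum (u := Finset.univ) fun i _ => (hdx i p).hasFDerivAt.pow 2)).add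
      (((hd p).hasFDerivAt.pow 2).const_mul (m ^ 2))
    have h' : HasFDerivAt (energyDensity m φ) _ p := h
    unfold dt at *
    rw [h'.fderiv]
    simp
  simp only [h1, dx_mul hdt (hdx _), dt_dx_comm hφ, Finset.sum_add_distrib, ← Finset.mul_sum]
  have h2 : ∑ i, 2 * dx i φ p * dx i (dt φ) p = 2 * ∑ i, dx i (dt φ) p * dx i φ p := by
    rw [Finset.mul_sum]
    exact Finset.sum_congr rfl fun i _ => by ring
  rw [h2]
  unfold box at hp
  linear_combination (-2 * dt φ p) * hp

/-- Elementary form of the dominant energy condition. -/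
lemma two_mul_sum_le_energyDensity (m : ℝ) (φ : ℝ × Spc d → ℝ) (p : ℝ × Spc d)
    {ω : Fin d → ℝ} (hω : ∑ i, ω i ^ 2 ≤ 1) :
    2 * ∑ i, ω i * (dt φ p * dx i φ p) ≤ energyDensity m φ p := by
  have h1 : 0 ≤ ∑ i, (dx i φ p - dt φ p * ω i) ^ 2 := by positivity
  have h2 : ∑ i, (dx i φ p - dt φ p * ω i) ^ 2 = ∑ i, dx i φ p ^ 2
      - 2 * ∑ i, ω i * (dt φ p * dx i φ p) + dt φ p ^ 2 * ∑ i, ω i ^ 2 := by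
    rw [Finset.mul_sum, Finset.mul_sum, ← Finset.sum_sub_distrib, ← Finset.sum_add_distrib]
    exact Finset.sum_congr rfl fun i _ => by ring
  have h3 := mul_le_mul_of_nonneg_left hω (sq_nonneg (dt φ p))
  have h4 : 0 ≤ m ^ 2 * φ p ^ 2 := by positivity
  unfold energyDensity
  linarith

/-- A smooth cutoff in spacetime, equal to `1` where `t + √(1 + ‖x‖²) ≤ K` and to `0` where
`t + √(1 + ‖x‖²) ≥ K + 1`. -/
def cutoff (K : ℝ) (p : ℝ × Spc d) : ℝ :=
  smoothTransition (K + 1 - (p.1 + √(1 + ‖p.2‖ ^ 2)))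

lemma contDiff_sqrt_add_norm_sq {c : ℝ} (hc : 0 < c) :
    ContDiff ℝ (⊤ : ℕ∞) (fun x : Spc d => √(c + ‖x‖ ^ 2)) :=
  (contDiff_const.add (contDiff_norm_sq ℝ)).sqrt fun x => by positivity

lemma dxs_sqrt_add_norm_sq {c : ℝ} (hc : 0 < c) (i : Fin d) (x : Spc d) :
    dxs i (fun x : Spc d => √(c + ‖x‖ ^ 2)) x = x i / √(c + ‖x‖ ^ 2) := by
  have h := (((hasStrictFDerivAt_norm_sq x).hasFDerivAt).const_add c).sqrt
    (by positivity : c + ‖x‖ ^ 2 ≠ 0)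
  unfold dxs
  rw [h.fderiv]
  simp [EuclideanSpace.inner_single_right]
  field_simp

lemma sum_sq_div_sqrt_le_one {c : ℝ} (hc : 0 < c) (x : Spc d) :
    ∑ i, (x i / √(c + ‖x‖ ^ 2)) ^ 2 ≤ 1 := by
  have h : 0 < c + ‖x‖ ^ 2 := by positivity
  simp only [div_pow, Real.sq_sqrt h.le]
  rw [← Finset.sum_div, ← EuclideanSpace.real_norm_sq_eq, div_le_one h]
  linarith

lemma contDiff_cutoff (K : ℝ) : ContDiff ℝ (⊤ : ℕ∞) (cutoff K : ℝ × Spc d → ℝ) :=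
  smoothTransition.contDiff.comp (contDiff_const.sub
    (contDiff_fst.add ((contDiff_sqrt_add_norm_sq one_pos).comp contDiff_snd)))

lemma cutoff_nonneg (K : ℝ) (p : ℝ × Spc d) : 0 ≤ cutoff K p := smoothTransition.nonneg _

lemma cutoff_le_one (K : ℝ) (p : ℝ × Spc d) : cutoff K p ≤ 1 := smoothTransition.le_one _

lemma cutoff_eq_zero {K t : ℝ} {x : Spc d} (ht : 1 < t) (hx : K < ‖x‖) :
    cutoff K (t, x) = 0 := by
  refine smoothTransition.zero_of_nonpos ?_
  have : ‖x‖ ≤ √(1 + ‖x‖ ^ 2) := Real.le_sqrt_of_sq_le (by linarith)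
  dsimp only
  linarith

lemma cutoff_eq_one {K : ℝ} {p : ℝ × Spc d} (hp : p.1 + √(1 + ‖p.2‖ ^ 2) ≤ K) :
    cutoff K p = 1 :=
  smoothTransition.one_of_one_le (by linarith)

/-- The cutoff decreases in `t` and its spatial gradient is dominated by its time derivative. -/
lemma exists_deriv_cutoff (K : ℝ) (p : ℝ × Spc d) :
    ∃ c : ℝ, c ≤ 0 ∧ dt (cutoff K) p = c ∧
      ∀ i, dx i (cutoff K) p = c * (p.2 i / √(1 + ‖p.2‖ ^ 2)) := by
  have hη : DifferentiableAt ℝ smoothTransition (K + 1 - (p.1 + √(1 + ‖p.2‖ ^ 2))) :=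
    (smoothTransition.contDiff (n := 1)).differentiable (by simp) _
  have hρ := (differentiable_of_smooth (contDiff_sqrt_add_norm_sq (d := d) one_pos) p.2).hasFDerivAt
  have h1 := ((hasFDerivAt_fst (𝕜 := ℝ) (p := p)).add
    (hρ.comp p (hasFDerivAt_snd (𝕜 := ℝ) (p := p)))).const_sub (K + 1)
  have h2 : HasFDerivAt (cutoff K) _ p := hη.hasDerivAt.comp_hasFDerivAt p h1
  have hx := fun i => dxs_sqrt_add_norm_sq (d := d) one_pos i p.2
  refine ⟨-deriv smoothTransition (K + 1 - (p.1 + √(1 + ‖p.2‖ ^ 2))),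
    neg_nonpos.2 smoothTransition.monotone.deriv_nonneg, ?_, fun i => ?_⟩
  · simp [dt, h2.fderiv]
  · rw [← hx i]
    simp [dx, dxs, h2.fderiv]

lemma divergence_cutoff_energy_nonpos {m : ℝ} {φ : ℝ × Spc d → ℝ}
    (hφ : ContDiff ℝ (⊤ : ℕ∞) φ) (K : ℝ) {p : ℝ × Spc d} (hp : box m φ p = 0) :
    dt (fun q => cutoff K q * energyDensity m φ q) p
      - 2 * ∑ i, dx i (fun q => cutoff K q * (dt φ q * dx i φ q)) p ≤ 0 := by
  have hχ := differentiable_of_smooth (contDiff_cutoff (d := d) K)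
  have hdt := differentiable_of_smooth (contDiff_dt hφ)
  have hJ : ∀ i, Differentiable ℝ (fun q => dt φ q * dx i φ q) := fun i =>
    hdt.fun_mul (differentiable_of_smooth (contDiff_dx hφ i))
  obtain ⟨c, hc, hct, hcx⟩ := exists_deriv_cutoff K p
  rw [dt_mul hχ (differentiable_of_smooth (contDiff_energyDensity m hφ)), dt_energyDensity hφ hp]
  simp only [dx_mul hχ (hJ _), hct, hcx, Finset.sum_add_distrib, ← Finset.mul_sum, mul_assoc]
  have h := mul_nonneg_of_nonpos_of_nonpos hc (sub_nonpos.2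
    (two_mul_sum_le_energyDensity m φ p (sum_sq_div_sqrt_le_one one_pos p.2)))
  linarith

/-- The energy density flux through the hyperboloid, in terms of the boosts. -/
lemma hyperboloidal_density_eq (m : ℝ) (φ : ℝ × Spc d → ℝ) {τ t : ℝ} (hτ : 0 < τ) (ht : 0 < t)
    (x : Spc d) (htx : t ^ 2 = τ ^ 2 + ‖x‖ ^ 2) :
    ((1 / (t * τ)) * ∑ i, (boost i φ (t, x)) ^ 2 + (τ / t) * (dt φ (t, x)) ^ 2
      + (t / τ) * m ^ 2 * (φ (t, x)) ^ 2) * (τ / t)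
    = energyDensity m φ (t, x)
      + 2 * ∑ i, x i / t * (dt φ (t, x) * dx i φ (t, x)) := by
  have h1 : ∑ i, (boost i φ (t, x)) ^ 2 = dt φ (t, x) ^ 2 * ‖x‖ ^ 2
      + 2 * t ^ 2 * ∑ i, x i / t * (dt φ (t, x) * dx i φ (t, x))
      + t ^ 2 * ∑ i, dx i φ (t, x) ^ 2 := by
    rw [EuclideanSpace.real_norm_sq_eq, Finset.mul_sum, Finset.mul_sum, Finset.mul_sum,
      ← Finset.sum_add_distrib, ← Finset.sum_add_distrib]
    refine Finset.sum_congr rfl fun i _ => ?_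
    simp only [boost]
    field_simp
    ring
  rw [h1, energyDensity]
  have h2 : ‖x‖ ^ 2 = t ^ 2 - τ ^ 2 := by linarith
  rw [h2]
  field_simp
  ring

end KleinGordon

/-- hyperboloidal energy inequality: for compactly supported data at
t = 2, the hyperboloidal energy is bounded by the initial energy. -/
theorem hyperboloidal_energy_inequality {d : ℕ} (hd : 1 ≤ d) (m : ℝ) (hm : 0 ≤ m)
    (φ : ℝ × Spc d → ℝ) (hφ : ContDiff ℝ (⊤ : ℕ∞) φ)
    (hsol : ∀ p : ℝ × Spc d, 2 ≤ p.1 → box m φ p = 0)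
    (f g : Spc d → ℝ) (hf : ∀ x, φ (2, x) = f x) (hg : ∀ x, dt φ (2, x) = g x)
    (hfs : ContDiff ℝ (⊤ : ℕ∞) f) (hgs : ContDiff ℝ (⊤ : ℕ∞) g)
    (hfsupp : tsupport f ⊆ Metric.ball 0 2) (hgsupp : tsupport g ⊆ Metric.ball 0 2) :
    ∀ τ : ℝ, 2 ≤ τ →
      energy m τ φ ≤ ∫ x : Spc d, (g x) ^ 2 + ‖fderiv ℝ f x‖ ^ 2 + m ^ 2 * (f x) ^ 2 := by
  intro τ hτ
  have hτ0 : 0 < τ := by linarith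
  set h : Spc d → ℝ := fun x => √(τ ^ 2 + ‖x‖ ^ 2) with hh
  have hpos : ∀ x : Spc d, 0 < τ ^ 2 + ‖x‖ ^ 2 := fun x => by positivity
  have h2 : ∀ x, 2 ≤ h x := fun x =>
    hτ.trans (Real.le_sqrt_of_sq_le (le_add_of_nonneg_right (sq_nonneg _)))
  have hh0 : ∀ x, 0 < h x := fun x => by linarith [h2 x]
  have hsmooth : ContDiff ℝ (⊤ : ℕ∞) h := contDiff_sqrt_add_norm_sq (by positivity)
  set q : Spc d → ℝ := fun x => energyDensity m φ (h x, x)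
    + 2 * ∑ i, x i / h x * (dt φ (h x, x) * dx i φ (h x, x)) with hq
  have henergy : energy m τ φ = ∫ x, q x :=
    integral_congr_ae (Filter.Eventually.of_forall fun x =>
      hyperboloidal_density_eq m φ hτ0 (hh0 x) x (Real.sq_sqrt (hpos x).le))
  have hdata : ∀ x, (g x) ^ 2 + ‖fderiv ℝ f x‖ ^ 2 + m ^ 2 * (f x) ^ 2
      = energyDensity m φ (2, x) := by
    intro x
    have hφf : (fun y => φ (2 + 0 * (0 : ℝ), y)) = f := by
      funext y; simpa using hf y
    have hdx : ∀ i, dx i φ (2, x) = dxs i f x := fun i => by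
      have := dxs_comp_graph (differentiable_of_smooth hφ) (v := fun _ => (0 : ℝ))
        (differentiable_const _) i 0 x
      rw [hφf] at this
      simpa using this.symm
    simp only [energyDensity, norm_fderiv_sq, hdx, hf, hg]
  have hdatac : Integrable fun x => energyDensity m φ (2, x) := by
    have hfc : HasCompactSupport f :=
      Metric.isCompact_of_isClosed_isBounded (isClosed_tsupport f)
        (Metric.isBounded_ball.subset hfsupp)
    have hgc : HasCompactSupport g :=
      Metric.isCompact_of_isClosed_isBounded (isClosed_tsupport g)
        (Metric.isBounded_ball.subset hgsupp)
    refine Continuous.integrable_of_hasCompactSupport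
      ((contDiff_energyDensity m hφ).continuous.comp (Continuous.prodMk_right 2)) ?_
    simp only [← hdata]
    refine HasCompactSupport.add (HasCompactSupport.add ?_ ?_) ?_
    · exact hgc.comp_left (g := fun y : ℝ => y ^ 2) (by simp)
    · exact (hfc.fderiv (𝕜 := ℝ)).comp_left (g := fun L : Spc d →L[ℝ] ℝ => ‖L‖ ^ 2) (by simp)
    · exact hfc.comp_left (g := fun y : ℝ => m ^ 2 * y ^ 2) (by simp)
  have hcut : ∀ n : ℕ, ∫ x, cutoff (n : ℝ) (h x, x) * q x ≤ ∫ x, energyDensity m φ (2, x) := by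
    intro n
    have hmono := integral_graph_le (v := fun x => h x - 2)
      ((contDiff_cutoff (d := d) n).mul (contDiff_energyDensity m hφ))
      (fun i => (contDiff_cutoff (d := d) n).mul ((contDiff_dt hφ).mul (contDiff_dx hφ i)))
      (hsmooth.sub contDiff_const) (fun x => sub_nonneg.2 (h2 x)) n
      (fun t x ht hx => by simp [cutoff_eq_zero ht hx])
      (fun i t x ht hx => by simp [cutoff_eq_zero ht hx])
      (fun p hp => divergence_cutoff_energy_nonpos hφ n (hsol p hp))
    have hdv : ∀ i x, dxs i (fun x => h x - 2) x = x i / h x := fun i x => by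
      rw [← dxs_sqrt_add_norm_sq (by positivity : 0 < τ ^ 2)]
      simp only [dxs, hh, fderiv_sub_const]
    have hle : ∫ x, cutoff (n : ℝ) (2, x) * energyDensity m φ (2, x)
        ≤ ∫ x, energyDensity m φ (2, x) := by
      refine integral_mono_of_nonneg (Filter.Eventually.of_forall fun x =>
        mul_nonneg (cutoff_nonneg _ _) (energyDensity_nonneg _ _ _)) hdatac
        (Filter.Eventually.of_forall fun x => ?_)
      exact mul_le_of_le_one_left (energyDensity_nonneg _ _ _) (cutoff_le_one _ _)
    refine le_trans (le_of_eq (integral_congr_ae (Filter.Eventually.of_forall fun x => ?_)))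
      (hmono.trans hle)
    simp only [hdv, add_sub_cancel, hq, mul_add, Finset.mul_sum]
    congr 1
    exact Finset.sum_congr rfl fun i _ => by ring
  simp only [henergy, hdata]
  by_cases hqi : Integrable q
  · refine le_of_tendsto (tendsto_integral_of_dominated_convergence (fun x : Spc d => ‖q x‖)
      (fun n => ?_) hqi.norm (fun n => Filter.Eventually.of_forall fun x => ?_)
      (Filter.Eventually.of_forall fun x => ?_)) (Filter.Eventually.of_forall hcut)
    · exact ((contDiff_cutoff (d := d) n).continuous.comp
        (hsmooth.continuous.prodMk continuous_id)).aestronglyMeasurable.mul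
          hqi.aestronglyMeasurable
    · rw [norm_mul, Real.norm_of_nonneg (cutoff_nonneg _ _)]
      exact mul_le_of_le_one_left (norm_nonneg _) (cutoff_le_one _ _)
    · refine tendsto_const_nhds.congr' ?_
      filter_upwards [Filter.eventually_ge_atTop ⌈h x + √(1 + ‖x‖ ^ 2)⌉₊] with n hn
      rw [cutoff_eq_one (Nat.ceil_le.1 hn), one_mul]
  · rw [integral_undef hqi]
    exact integral_nonneg fun x => energyDensity_nonneg _ _ _
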